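/- arXiv:1902.02615 — 2 statements merged into one kernel-verified Lean document; each statement's English description precedes it below -/
import Mathlib

section
/- Let A be an m×n real matrix, b ∈ ℝ^m, y ∈ ℝ^m, s ∈ ℝ^n, and ℓ, ℓ', u, u' ∈ ℝ^n with ℓ_j ≤ ℓ'_j and u'_j ≤ u_j for all j. If y_i ≥ 0 for all i, yᵀA + s = 0, and yᵀb + s{ℓ,u} > 0, then also yᵀb + s{ℓ',u'} > 0; in particular (y,s) certifies that there is no x with A x ≥ b componentwise and ℓ'_j ≤ x_j ≤ u'_j for all j. -/
/-- A Farkas proof (y,s) for bounds ℓ,u remains valid for tightened bounds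
ℓ',u': the dual infeasibility condition still holds, and in particular the
tightened system Ax ≥ b, ℓ' ≤ x ≤ u' is infeasible. -/
theorem farkas_proof_tightened
    (m n : ℕ) (A : Matrix (Fin m) (Fin n) ℝ) (b : Fin m → ℝ)
    (y : Fin m → ℝ) (s : Fin n → ℝ) (ℓ ℓ' u u' : Fin n → ℝ)
    (hl : ∀ j, ℓ j ≤ ℓ' j) (hu : ∀ j, u' j ≤ u j)
    (hy : ∀ i, 0 ≤ y i)
    (hAs : ∀ j, (∑ i, y i * A i j) + s j = 0)
    (hpos : 0 < (∑ i, y i * b i) +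
      ∑ j, if 0 < s j then s j * ℓ j else if s j < 0 then s j * u j else 0) :
    (0 < (∑ i, y i * b i) +
      ∑ j, if 0 < s j then s j * ℓ' j else if s j < 0 then s j * u' j else 0) ∧
    ¬ ∃ x : Fin n → ℝ,
        (∀ i, b i ≤ ∑ j, A i j * x j) ∧ (∀ j, ℓ' j ≤ x j ∧ x j ≤ u' j) := by
  have h1 : 0 < (∑ i, y i * b i) +
      ∑ j, if 0 < s j then s j * ℓ' j else if s j < 0 then s j * u' j else 0 := by
    refine lt_of_lt_of_le hpos (add_le_add le_rfl (Finset.sum_le_sum fun j _ => ?_))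
    split_ifs with h h2
    · exact mul_le_mul_of_nonneg_left (hl j) h.le
    · exact mul_le_mul_of_nonpos_left (hu j) h2.le
    · exact le_rfl
  refine ⟨h1, ?_⟩
  rintro ⟨x, hx, hb⟩
  have h2 : (∑ j, if 0 < s j then s j * ℓ' j else if s j < 0 then s j * u' j else 0)
      ≤ ∑ j, s j * x j := by
    refine Finset.sum_le_sum fun j _ => ?_
    split_ifs with h h2
    · exact mul_le_mul_of_nonneg_left (hb j).1 h.le
    · exact mul_le_mul_of_nonpos_left (hb j).2 h2.le
    · have h0 : s j = 0 := le_antisymm (not_lt.mp h) (not_lt.mp h2)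
      simp [h0]
  have h3 : ∑ i, y i * b i ≤ ∑ i, y i * ∑ j, A i j * x j :=
    Finset.sum_le_sum fun i _ => mul_le_mul_of_nonneg_left (hx i) (hy i)
  have h4 : (∑ i, y i * ∑ j, A i j * x j) + ∑ j, s j * x j = 0 := by
    have h5 : ∑ i, y i * ∑ j, A i j * x j = ∑ j, (∑ i, y i * A i j) * x j := by
      simp only [Finset.mul_sum, Finset.sum_mul]
      rw [Finset.sum_comm]
      simp only [mul_assoc]
    rw [h5, ← Finset.sum_add_distrib]
    refine Finset.sum_eq_zero fun j _ => ?_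
    rw [← add_mul, hAs j, zero_mul]
  linarith
end

section
/- Let A be an m×n real matrix, b ∈ ℝ^m, and ℓ, u, x ∈ ℝ^n with A x ≥ b componentwise and ℓ_k ≤ x_k ≤ u_k for all k. Fix a column index j and suppose variable j has zero up-locks, i.e., A_{ij} ≥ 0 for every row index i. Define x' by x'_j := u_j and x'_k := x_k for k ≠ j. Then A x' ≥ b componentwise and ℓ_k ≤ x'_k ≤ u_k for all k. -/
/-- A variable with zero up-locks (no negative coefficient in its column)
can be set to its upper bound without violating any constraint or bound. -/
theorem zero_up_locks_set_to_upper
    (m n : ℕ) (A : Matrix (Fin m) (Fin n) ℝ) (b : Fin m → ℝ)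
    (ℓ u x : Fin n → ℝ)
    (hx : ∀ i, b i ≤ ∑ k, A i k * x k)
    (hbox : ∀ k, ℓ k ≤ x k ∧ x k ≤ u k)
    (j : Fin n) (hlock : ∀ i, 0 ≤ A i j) :
    (∀ i, b i ≤ ∑ k, A i k * (Function.update x j (u j)) k) ∧
    (∀ k, ℓ k ≤ (Function.update x j (u j)) k ∧
          (Function.update x j (u j)) k ≤ u k) := by
  refine ⟨fun i => (hx i).trans (Finset.sum_le_sum fun k _ => ?_), fun k => ?_⟩
  · by_cases h : k = j
    · subst h
      rw [Function.update_self]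
      exact mul_le_mul_of_nonneg_left (hbox k).2 (hlock i)
    · rw [Function.update_of_ne h]
  · by_cases h : k = j
    · subst h
      rw [Function.update_self]
      exact ⟨(hbox k).1.trans (hbox k).2, le_refl _⟩
    · rw [Function.update_of_ne h]
      exact hbox k
end
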